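/- Fix constants 0 < Γ₀ ≤ Γ₁, 0 < m₀ ≤ m₁, and u₁ < 1. Then there exist constants C, α > 0 such that for every Γ ∈ [Γ₀, Γ₁], every μ, μ+η, ν ∈ [m₀, m₁], and every u₊ ∈ [u*, u₁] with u* := Γ/(Γ+2), there exists a C¹ solution (û, ê) : ℝ → ℝ² of the system u' = (2μ+η)⁻¹((u−1) + Γ(e/u − e₋)), e' = ν⁻¹((e−e₋) − (u−1)²/2 + (u−1)Γe₋), with e₋ := ((Γ+2)u₊−Γ)/(2Γ(Γ+1)) and e₊ := u₊(Γ+2−Γu₊)/(2Γ(Γ+1)), which connects the endstates with uniform exponential decay: |û(x) − 1| + |ê(x) − e₋| ≤ C e^{αx} for all x ≤ 0, and |û(x) − u₊| + |ê(x) − e₊| ≤ C e^{−αx} for all x ≥ 0. -/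

import Mathlib

open Set Filter Topology
open scoped NNReal

/-- A bounded, uniformly Lipschitz, time-continuous scalar vector field has solutions on every
compact interval, issued from the left endpoint. -/
theorem exists_hasDerivWithinAt_Icc_of_bounded_lipschitz {F : ℝ → ℝ → ℝ} {K L : ℝ≥0}
    (hFc : ∀ x, Continuous fun t => F t x) (hFl : ∀ t, LipschitzWith K (F t))
    (hFb : ∀ t x, |F t x| ≤ L) {a b : ℝ} (hab : a ≤ b) (x₀ : ℝ) :
    ∃ p : ℝ → ℝ, p a = x₀ ∧
      ∀ t ∈ Icc a b, HasDerivWithinAt p (F t (p t)) (Icc a b) t := by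
  have hPL : IsPicardLindelof F (⟨a, left_mem_Icc.2 hab⟩ : Icc a b) x₀
      (L * (b - a).toNNReal) 0 L K :=
    { lipschitzOnWith := fun t _ => (hFl t).lipschitzOnWith
      continuousOn := fun x _ => (hFc x).continuousOn
      norm_le := fun t _ x _ => hFb t x
      mul_max_le := by simp [hab] }
  exact hPL.exists_eq_forall_mem_Icc_hasDerivWithinAt₀

/-- Two solutions of a scalar ODE with vector field antitone in the state approach each other. -/
theorem abs_sub_le_of_antitone_field {F : ℝ → ℝ → ℝ} (hF : ∀ t, Antitone (F t)) {a b : ℝ}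
    {p q : ℝ → ℝ} (hp : ∀ t ∈ Icc a b, HasDerivWithinAt p (F t (p t)) (Icc a b) t)
    (hq : ∀ t ∈ Icc a b, HasDerivWithinAt q (F t (q t)) (Icc a b) t) {t : ℝ}
    (ht : t ∈ Icc a b) : |p t - q t| ≤ |p a - q a| := by
  have hd : ∀ s ∈ Icc a b, HasDerivWithinAt (fun s => (p s - q s) ^ 2)
      (2 * (p s - q s) * (F s (p s) - F s (q s))) (Icc a b) s := fun s hs => by
    exact (((hp s hs).sub (hq s hs)).pow 2).congr_deriv (by simp)
  have hanti : AntitoneOn (fun s => (p s - q s) ^ 2) (Icc a b) := by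
    refine antitoneOn_of_hasDerivWithinAt_nonpos (convex_Icc a b)
      (fun s hs => (hd s hs).continuousWithinAt)
      (fun s hs => (hd s (interior_subset hs)).mono interior_subset) fun s _ => ?_
    rcases le_total (p s) (q s) with h | h
    · exact mul_nonpos_of_nonpos_of_nonneg (by linarith) (sub_nonneg.2 (hF s h))
    · exact mul_nonpos_of_nonneg_of_nonpos (by linarith) (sub_nonpos.2 (hF s h))
  exact sq_le_sq.1 (hanti (left_mem_Icc.2 (ht.1.trans ht.2)) ht ht.1)

/-- A scalar ODE whose vector field is antitone in the state, with strict lower and upper barriers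
that pinch together at `-∞`, has an entire solution between the barriers. -/
theorem exists_entire_solution_of_barriers {F : ℝ → ℝ → ℝ} {K L : ℝ≥0}
    (hFc : ∀ x, Continuous fun t => F t x) (hFl : ∀ t, LipschitzWith K (F t))
    (hFb : ∀ t x, |F t x| ≤ L) (hFa : ∀ t, Antitone (F t)) {lo lo' hi hi' : ℝ → ℝ}
    (hlo : ∀ t, HasDerivAt lo (lo' t) t) (hhi : ∀ t, HasDerivAt hi (hi' t) t)
    (hlohi : ∀ t, lo t ≤ hi t) (hlob : ∀ t, lo' t < F t (lo t)) (hhib : ∀ t, F t (hi t) < hi' t)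
    (hpinch : Tendsto (fun t => hi t - lo t) atBot (𝓝 0)) :
    ∃ p : ℝ → ℝ, ∀ t, HasDerivAt p (F t (p t)) t ∧ lo t ≤ p t ∧ p t ≤ hi t := by
  have hex : ∀ n : ℕ, ∃ p : ℝ → ℝ, p (-n) = hi (-n) ∧
      ∀ t ∈ Icc (-n : ℝ) n, HasDerivWithinAt p (F t (p t)) (Icc (-n : ℝ) n) t := fun n =>
    exists_hasDerivWithinAt_Icc_of_bounded_lipschitz hFc hFl hFb
      (neg_le_self n.cast_nonneg) _
  choose p hp0 hp using hex
  have hpc : ∀ n, ContinuousOn (p n) (Icc (-n : ℝ) n) := fun n t ht =>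
    (hp n t ht).continuousWithinAt
  have hpr : ∀ n : ℕ, ∀ t ∈ Ico (-n : ℝ) n, HasDerivWithinAt (p n) (F t (p n t)) (Ici t) t :=
    fun n t ht => (hp n t (Ico_subset_Icc_self ht)).mono_of_mem_nhdsWithin
      (Icc_mem_nhdsGE_of_mem ht)
  have hple : ∀ n : ℕ, ∀ t ∈ Icc (-n : ℝ) n, p n t ≤ hi t := fun n =>
    image_le_of_deriv_right_lt_deriv_boundary (hpc n) (hpr n) (hp0 n).le hhi
      fun t _ h => h ▸ hhib t
  have hlep : ∀ n : ℕ, ∀ t ∈ Icc (-n : ℝ) n, lo t ≤ p n t := fun n =>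
    image_le_of_deriv_right_lt_deriv_boundary'
      (fun t _ => (hlo t).continuousAt.continuousWithinAt)
      (fun t _ => (hlo t).hasDerivWithinAt) ((hlohi _).trans (hp0 n).ge) (hpc n) (hpr n)
      fun t _ h => h ▸ hlob t
  have hsub : ∀ {m n : ℕ}, n ≤ m → Icc (-n : ℝ) n ⊆ Icc (-m : ℝ) m := fun {m n} h => by
    have : (n : ℝ) ≤ m := by exact_mod_cast h
    exact Icc_subset_Icc (neg_le_neg this) this
  have hdiff : ∀ {m n : ℕ}, n ≤ m → ∀ t ∈ Icc (-n : ℝ) n,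
      |p m t - p n t| ≤ hi (-n) - lo (-n) := fun {m n} h t ht => by
    refine (abs_sub_le_of_antitone_field hFa
      (fun s hs => (hp m s (hsub h hs)).mono (hsub h)) (hp n) ht).trans ?_
    have hmem : (-n : ℝ) ∈ Icc (-n : ℝ) n := left_mem_Icc.2 (neg_le_self n.cast_nonneg)
    have h1 := hple m _ (hsub h hmem)
    have h2 := hlep m _ (hsub h hmem)
    rw [hp0 n, abs_le]
    constructor <;> linarith
  have hgap : Tendsto (fun n : ℕ => hi (-n) - lo (-n)) atTop (𝓝 0) :=
    hpinch.comp (tendsto_neg_atTop_atBot.comp tendsto_natCast_atTop_atTop)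
  have hmemEv : ∀ t : ℝ, ∀ᶠ n : ℕ in atTop, t ∈ Icc (-n : ℝ) n := fun t => by
    filter_upwards [eventually_ge_atTop ⌈|t|⌉₊] with n hn
    exact abs_le.1 (Nat.ceil_le.1 hn)
  have hlim : ∀ t, ∃ y, Tendsto (fun n => p n t) atTop (𝓝 y) := fun t => by
    refine cauchySeq_tendsto_of_complete (Metric.cauchySeq_iff'.2 fun ε hε => ?_)
    obtain ⟨N, hN, hNt⟩ := ((hgap.eventually (gt_mem_nhds hε)).and (hmemEv t)).exists
    exact ⟨N, fun n hn => (hdiff hn t hNt).trans_lt hN⟩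
  choose P hP using hlim
  have hPdiff : ∀ n : ℕ, ∀ t ∈ Icc (-n : ℝ) n, |P t - p n t| ≤ hi (-n) - lo (-n) :=
    fun n t ht => le_of_tendsto ((hP t).sub_const _).abs
      ((eventually_ge_atTop n).mono fun m hm => hdiff hm t ht)
  refine ⟨P, fun t => ⟨?_, ?_, ?_⟩⟩
  · obtain ⟨N, hN⟩ := exists_nat_gt |t|
    have ht : t ∈ Ioo (-N : ℝ) N := abs_lt.1 hN
    refine hasDerivAt_of_tendstoLocallyUniformlyOn (f := p) (l := atTop)
      (f' := fun n s => F s (p n s)) (g' := fun s => F s (P s)) isOpen_Ioo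
      (TendstoUniformlyOn.tendstoLocallyUniformlyOn ?_) ?_ (fun s _ => hP s) ht
    · rw [Metric.tendstoUniformlyOn_iff]
      intro ε hε
      have hK : Tendsto (fun n : ℕ => K * (hi (-n) - lo (-n))) atTop (𝓝 0) := by
        simpa using hgap.const_mul (K : ℝ)
      filter_upwards [hK.eventually (gt_mem_nhds hε), eventually_ge_atTop N] with n hn hNn s hs
      refine ((hFl s).dist_le_mul _ _).trans_lt (lt_of_le_of_lt ?_ hn)
      exact mul_le_mul_of_nonneg_left (hPdiff n s (hsub hNn (Ioo_subset_Icc_self hs))) K.2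
    · filter_upwards [eventually_ge_atTop N] with n hn s hs
      have hnN : (N : ℝ) ≤ n := by exact_mod_cast hn
      exact (hp n s (hsub hn (Ioo_subset_Icc_self hs))).hasDerivAt
        (Icc_mem_nhds (by linarith [hs.1]) (by linarith [hs.2]))
  · exact ge_of_tendsto (hP t) ((hmemEv t).mono fun n hn => hlep n t hn)
  · exact le_of_tendsto (hP t) ((hmemEv t).mono fun n hn => hple n t hn)

/-- A function with continuous derivative between two positive constants
and vanishing at `0` has a differentiable inverse of comparable size. -/
theorem exists_hasDerivAt_inverse {v : ℝ → ℝ} (hv : Continuous v) {c C : ℝ} (hc : 0 < c)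
    (hcv : ∀ t, c ≤ v t) (hvC : ∀ t, v t ≤ C) :
    ∃ T : ℝ → ℝ, (∀ y, HasDerivAt T (v (T y))⁻¹ y) ∧
      (∀ y, 0 ≤ y → y / C ≤ T y) ∧ ∀ y, y ≤ 0 → T y ≤ y / C := by
  set X : ℝ → ℝ := fun t => ∫ s in (0 : ℝ)..t, v s with hX
  have hXd : ∀ t, HasDerivAt X (v t) t := fun t =>
    intervalIntegral.integral_hasDerivAt_right (hv.intervalIntegrable _ _)
      (hv.stronglyMeasurableAtFilter _ _) hv.continuousAt
  have hX0 : X 0 = 0 := intervalIntegral.integral_same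
  have hXdiff : Differentiable ℝ X := fun t => (hXd t).differentiableAt
  have hC : 0 < C := hc.trans_le ((hcv 0).trans (hvC 0))
  have hlow := mul_sub_le_image_sub_of_le_deriv hXdiff (C := c) fun t => (hXd t).deriv ▸ hcv t
  have hup := image_sub_le_mul_sub_of_deriv_le hXdiff (C := C) fun t => (hXd t).deriv ▸ hvC t
  have hmono : StrictMono X :=
    strictMono_of_deriv_pos fun t => (hXd t).deriv ▸ hc.trans_le (hcv t)
  have hsurj : Function.Surjective X := by
    refine hXdiff.continuous.surjective ?_ ?_
    · refine tendsto_atTop_mono' _ ?_ (tendsto_id.const_mul_atTop hc)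
      filter_upwards [eventually_ge_atTop 0] with t ht
      simpa [hX0] using hlow ht
    · refine tendsto_atBot_mono' _ ?_ (tendsto_id.const_mul_atBot hc)
      filter_upwards [eventually_le_atBot 0] with t ht
      simpa [hX0] using hlow ht
  let T := (hmono.orderIsoOfSurjective X hsurj).symm
  have hXT : ∀ y, X (T y) = y := fun y =>
    (hmono.orderIsoOfSurjective X hsurj).apply_symm_apply y
  have hT0 : T 0 = 0 := hmono.injective (by rw [hXT, hX0])
  refine ⟨T, fun y => ?_, fun y hy => ?_, fun y hy => ?_⟩
  · exact HasDerivAt.of_local_left_inverse T.continuous.continuousAt (hXd _)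
      (hc.trans_le (hcv _)).ne' (Eventually.of_forall hXT)
  · have h : 0 ≤ T y := hT0 ▸ T.monotone hy
    have := hup h
    rw [hXT, hX0] at this
    rw [div_le_iff₀ hC]; linarith
  · have h : T y ≤ 0 := hT0 ▸ T.monotone hy
    have := hup h
    rw [hXT, hX0] at this
    rw [le_div_iff₀ hC]; linarith

/-- The reciprocal of the truncation to `[δ, 1]` is Lipschitz. -/
theorem abs_inv_clamp_sub_le {δ : ℝ} (hδ : 0 < δ) (x y : ℝ) :
    |(max δ (min 1 x))⁻¹ - (max δ (min 1 y))⁻¹| ≤ (δ ^ 2)⁻¹ * |x - y| := by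
  have hx : δ ≤ max δ (min 1 x) := le_max_left _ _
  have hy : δ ≤ max δ (min 1 y) := le_max_left _ _
  have hd : |max δ (min 1 y) - max δ (min 1 x)| ≤ |x - y| := by
    rw [abs_sub_comm x y]
    refine (abs_max_sub_max_le_max _ _ _ _).trans ?_
    have := abs_min_sub_min_le_max 1 y 1 x
    simp only [sub_self, abs_zero, abs_nonneg, sup_of_le_right] at this ⊢
    exact this
  rw [inv_sub_inv (hδ.trans_le hx).ne' (hδ.trans_le hy).ne', abs_div,
    abs_of_pos (mul_pos (hδ.trans_le hx) (hδ.trans_le hy)), div_eq_inv_mul]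
  have h2 : δ ^ 2 ≤ max δ (min 1 x) * max δ (min 1 y) := by
    rw [sq]; exact mul_le_mul hx hy hδ.le (hδ.le.trans hx)
  exact mul_le_mul (inv_anti₀ (by positivity) h2) hd (abs_nonneg _) (by positivity)

/-- Under the barrier conditions, `p' = A + B (h / p - 1)` has an entire solution with
`δ h ≤ p ≤ h`. -/
theorem exists_gap_solution {h h' A B : ℝ → ℝ} {M H L δ : ℝ} (hδ0 : 0 < δ) (hδ1 : δ ≤ 1)
    (hh : ∀ s, HasDerivAt h (h' s) s) (hpos : ∀ s, 0 < h s) (hbot : Tendsto h atBot (𝓝 0))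
    (hH : ∀ s, h s ≤ H) (hA : Continuous A) (hB : Continuous B) (hB0 : ∀ s, 0 ≤ B s)
    (hM : 0 ≤ M) (hBM : ∀ s, B s ≤ M * h s) (hAL : ∀ s, |A s| ≤ L)
    (hlo : ∀ s, δ * h' s < A s + B s * (δ⁻¹ - 1)) (hhi : ∀ s, A s < h' s) :
    ∃ p : ℝ → ℝ, ∀ s, HasDerivAt p (A s + B s * (h s / p s - 1)) s ∧
      δ * h s ≤ p s ∧ p s ≤ h s := by
  have hhc : Continuous h := continuous_iff_continuousAt.2 fun s => (hh s).continuousAt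
  have hinv : ∀ y : ℝ, 1 ≤ (max δ (min 1 y))⁻¹ ∧ (max δ (min 1 y))⁻¹ ≤ δ⁻¹ := fun y =>
    ⟨(one_le_inv₀ (hδ0.trans_le (le_max_left _ _))).2 (max_le hδ1 (min_le_left _ _)),
      inv_anti₀ hδ0 (le_max_left _ _)⟩
  set F : ℝ → ℝ → ℝ := fun s x => A s + B s * ((max δ (min 1 (x / h s)))⁻¹ - 1) with hF
  have hFc : ∀ x, Continuous fun t => F t x := fun x => by
    refine hA.add (hB.mul (Continuous.sub ?_ continuous_const))
    refine Continuous.inv₀ ?_ fun s => (hδ0.trans_le (le_max_left _ _)).ne'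
    exact continuous_const.max (continuous_const.min
      (continuous_const.div hhc fun s => (hpos s).ne'))
  have hFl : ∀ t, LipschitzWith (M * (δ ^ 2)⁻¹).toNNReal (F t) := fun t => by
    refine LipschitzWith.of_dist_le_mul fun x y => ?_
    rw [Real.coe_toNNReal _ (by positivity), Real.dist_eq, Real.dist_eq]
    have e1 : F t x - F t y = B t *
        ((max δ (min 1 (x / h t)))⁻¹ - (max δ (min 1 (y / h t)))⁻¹) := by
      simp only [hF]; ring
    have hlip := abs_inv_clamp_sub_le hδ0 (x / h t) (y / h t)
    have hdiv : |x / h t - y / h t| = |x - y| / h t := by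
      rw [← sub_div, abs_div, abs_of_pos (hpos t)]
    rw [hdiv] at hlip
    rw [e1, abs_mul, abs_of_nonneg (hB0 t)]
    calc B t * |(max δ (min 1 (x / h t)))⁻¹ - (max δ (min 1 (y / h t)))⁻¹|
        ≤ (M * h t) * ((δ ^ 2)⁻¹ * (|x - y| / h t)) :=
          mul_le_mul (hBM t) hlip (abs_nonneg _) (mul_nonneg hM (hpos t).le)
      _ = M * (δ ^ 2)⁻¹ * |x - y| := by
          have := (hpos t).ne'
          field_simp
  have hL0 : 0 ≤ L := (abs_nonneg _).trans (hAL 0)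
  have hH0 : 0 ≤ H := (hpos 0).le.trans (hH 0)
  have hFb : ∀ t x, |F t x| ≤ (L + M * H * δ⁻¹).toNNReal := fun t x => by
    rw [Real.coe_toNNReal _ (by positivity)]
    refine (abs_add_le _ _).trans (add_le_add (hAL t) ?_)
    obtain ⟨h1, h2⟩ := hinv (x / h t)
    rw [abs_of_nonneg (mul_nonneg (hB0 t) (sub_nonneg.2 h1))]
    exact mul_le_mul ((hBM t).trans (mul_le_mul_of_nonneg_left (hH t) hM)) (by linarith)
      (by linarith) (by positivity)
  have hFa : ∀ t, Antitone (F t) := fun t x y hxy => by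
    have hc : max δ (min 1 (x / h t)) ≤ max δ (min 1 (y / h t)) :=
      max_le_max le_rfl (min_le_min le_rfl (div_le_div_of_nonneg_right hxy (hpos t).le))
    have := inv_anti₀ (hδ0.trans_le (le_max_left δ (min 1 (x / h t)))) hc
    exact add_le_add le_rfl (mul_le_mul_of_nonneg_left (by linarith) (hB0 t))
  obtain ⟨p, hp⟩ := exists_entire_solution_of_barriers hFc hFl hFb hFa
    (lo := fun s => δ * h s) (hi := h) (fun s => (hh s).const_mul δ) hh
    (fun s => mul_le_of_le_one_left (hpos s).le hδ1)
    (fun s => by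
      simpa [hF, mul_div_assoc, div_self (hpos s).ne', min_eq_right hδ1] using hlo s)
    (fun s => by simpa [hF, div_self (hpos s).ne', max_eq_right hδ1] using hhi s)
    (by simpa using hbot.sub (hbot.const_mul δ))
  refine ⟨p, fun s => ⟨?_, (hp s).2⟩⟩
  obtain ⟨hd, h1, h2⟩ := hp s
  have hcl : max δ (min 1 (p s / h s)) = p s / h s := by
    rw [min_eq_right ((div_le_one (hpos s)).2 h2), max_eq_right ((le_div_iff₀ (hpos s)).2 h1)]
  simpa only [hF, hcl, inv_div] using hd

theorem Real.sigmoid_le_exp (x : ℝ) : Real.sigmoid x ≤ Real.exp x := by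
  have h := Real.sigmoid_mul_rexp_neg x
  rw [← div_le_one (Real.exp_pos x), div_eq_mul_inv, ← Real.exp_neg, h]
  exact Real.sigmoid_le_one _

/-- Existence of a profile lying between the two nullclines, with an explicit decay rate. -/
theorem exists_profile_between_nullclines {Γ D ν up em δ : ℝ} (hΓ : 0 < Γ) (hD : 0 < D)
    (hν : 0 < ν) (hup : 0 < up) (hup1 : up < 1) (hem : 2 * Γ * (Γ + 1) * em = (Γ + 2) * up - Γ)
    (hem0 : 0 ≤ em) (hem1 : Γ * em ≤ 1) (hδ0 : 0 < δ) (hδ : δ ≤ 1 / 2)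
    (hδβ : δ * (1 / Γ + 3) ≤ D * up / (ν * Γ)) :
    ∃ u e : ℝ → ℝ,
      (∀ x, HasDerivAt u (D⁻¹ * ((u x - 1) + Γ * (e x / u x - em))) x) ∧
      (∀ x, HasDerivAt e (ν⁻¹ * ((e x - em) - (u x - 1) ^ 2 / 2 + (u x - 1) * Γ * em)) x) ∧
      (∀ x, up < u x ∧ u x < 1) ∧
      (∀ x, em + (u x - 1) ^ 2 / 2 - (u x - 1) * Γ * em ≤ e x ∧
        e x ≤ u x * (em + (1 - u x) / Γ)) ∧
      (∀ x, x ≤ 0 → 1 - u x ≤ Real.exp (x / (D / ((1 - up) * δ)))) ∧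
      ∀ x, 0 ≤ x → u x - up ≤ Real.exp (-(x / (D / ((1 - up) * δ)))) := by
  set d := 1 - up with hd
  have hd0 : 0 < d := sub_pos.2 hup1
  have hd1 : d ≤ 1 := by linarith
  set k := (Γ + 2) / (2 * Γ) with hk
  have hk0 : 0 < k := by positivity
  set β := D / (ν * Γ) with hβ
  have hβ0 : 0 < β := by positivity
  set U : ℝ → ℝ := fun s => up + d * Real.sigmoid s with hU
  set U' : ℝ → ℝ := fun s => d * (Real.sigmoid s * (1 - Real.sigmoid s)) with hU'
  set h : ℝ → ℝ := fun s => k * ((1 - U s) * (U s - up)) with hh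
  have hσ0 := Real.sigmoid_pos
  have hσ1 := Real.sigmoid_lt_one
  have hU0 : ∀ s, up < U s := fun s => lt_add_of_pos_right _ (mul_pos hd0 (hσ0 s))
  have hU1 : ∀ s, U s < 1 := fun s => by
    have := mul_lt_mul_of_pos_left (hσ1 s) hd0
    simp only [hU]; linarith
  have hUpos : ∀ s, 0 < U s := fun s => hup.trans (hU0 s)
  have hU'pos : ∀ s, 0 < U' s := fun s =>
    mul_pos hd0 (mul_pos (hσ0 s) (sub_pos.2 (hσ1 s)))
  have hU'1 : ∀ s, U' s ≤ 1 := fun s => by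
    have h1 : Real.sigmoid s * (1 - Real.sigmoid s) ≤ 1 :=
      mul_le_one₀ (hσ1 s).le (sub_pos.2 (hσ1 s)).le (by linarith [hσ0 s])
    exact mul_le_one₀ hd1 (mul_pos (hσ0 s) (sub_pos.2 (hσ1 s))).le h1
  have hUd : ∀ s, HasDerivAt U (U' s) s := fun s =>
    ((Real.hasDerivAt_sigmoid s).const_mul d).const_add up
  have hUc : Continuous U := continuous_const.add (continuous_const.mul continuous_sigmoid)
  have hU'c : Continuous U' := continuous_const.mul
    (continuous_sigmoid.mul (continuous_const.sub continuous_sigmoid))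
  have hhU' : ∀ s, h s = k * d * U' s := fun s => by
    simp only [hh, hU, hU', hd]; ring
  have hhd : ∀ s, HasDerivAt h (U' s * (k * (1 + up - 2 * U s))) s := fun s =>
    ((((hUd s).const_sub 1).mul ((hUd s).sub_const up)).const_mul k).congr_deriv (by ring)
  have hhpos : ∀ s, 0 < h s := fun s => by
    rw [hhU']; exact mul_pos (mul_pos hk0 hd0) (hU'pos s)
  have hhbot : Tendsto h atBot (𝓝 0) := by
    have h1 : Tendsto U atBot (𝓝 up) := by
      simpa using (Real.tendsto_sigmoid_atBot.const_mul d).const_add up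
    simpa using ((h1.const_sub 1).mul (h1.sub_const up)).const_mul k
  have hslope : ∀ w : ℝ,
      k * (1 + up - 2 * w) = (em + (1 - 2 * w) / Γ) - ((w - 1) - Γ * em) := fun w => by
    rw [hk]; field_simp; linear_combination -hem
  have hΓi : 0 < 1 / Γ := by positivity
  have hfl : ∀ s, -(1 / Γ) ≤ em + (1 - 2 * U s) / Γ := fun s => by
    have h1 : (1 - 2 * U s) / Γ = -(1 / Γ) + 2 * (1 - U s) / Γ := by ring
    have h2 : 0 ≤ 2 * (1 - U s) / Γ := div_nonneg (by linarith [hU1 s]) hΓ.le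
    linarith
  have hfu : ∀ s, em + (1 - 2 * U s) / Γ ≤ em + 1 / Γ := fun s => by
    have := div_le_div_of_nonneg_right (show 1 - 2 * U s ≤ 1 by linarith [hUpos s]) hΓ.le
    linarith
  obtain ⟨p, hp⟩ := exists_gap_solution (h := h)
    (A := fun s => U' s * (em + (1 - 2 * U s) / Γ)) (B := fun s => U' s * (β * U s))
    (M := β / (k * d)) (H := k * d) (L := em + 1 / Γ) hδ0 (by linarith) hhd hhpos hhbot
    (fun s => by
      rw [hhU']; exact mul_le_of_le_one_right (mul_pos hk0 hd0).le (hU'1 s))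
    (hU'c.mul (continuous_const.add
      ((continuous_const.sub (continuous_const.mul hUc)).div_const Γ)))
    (hU'c.mul (continuous_const.mul hUc))
    (fun s => (mul_pos (hU'pos s) (mul_pos hβ0 (hUpos s))).le)
    (by positivity)
    (fun s => by
      have h1 : β / (k * d) * h s = U' s * β := by rw [hhU']; field_simp
      rw [h1]
      exact mul_le_mul_of_nonneg_left (mul_le_of_le_one_right hβ0.le (hU1 s).le) (hU'pos s).le)
    (fun s => by
      rw [abs_mul, abs_of_pos (hU'pos s)]
      refine (mul_le_of_le_one_left (abs_nonneg _) (hU'1 s)).trans (abs_le.2 ⟨?_, hfu s⟩)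
      linarith [hfl s])
    (fun s => by
      have hβU : δ * (1 / Γ + 3) ≤ β * U s := by
        refine hδβ.trans ?_
        rw [hβ, div_mul_eq_mul_div]
        exact div_le_div_of_nonneg_right
          (mul_le_mul_of_nonneg_left (hU0 s).le hD.le) (by positivity)
      have h1 : (1 / Γ + 3) * (1 - δ) ≤ β * U s * (δ⁻¹ - 1) := by
        have h2 : 0 ≤ δ⁻¹ - 1 := by
          have := (one_le_inv₀ hδ0).2 (by linarith : δ ≤ 1)
          linarith
        have h3 := mul_le_mul_of_nonneg_right hβU h2
        have h4 : δ * (1 / Γ + 3) * (δ⁻¹ - 1) = (1 / Γ + 3) * (1 - δ) := by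
          field_simp
        linarith
      have h2 : δ * (k * (1 + up - 2 * U s)) <
          (em + (1 - 2 * U s) / Γ) + β * U s * (δ⁻¹ - 1) := by
        rw [hslope]
        nlinarith [hfl s, hUpos s, mul_nonneg (by linarith : 0 ≤ 1 - δ)
          (by linarith [hfl s] : 0 ≤ em + (1 - 2 * U s) / Γ + 1 / Γ),
          mul_nonneg hδ0.le (by linarith [hUpos s] : 0 ≤ U s - 1 - Γ * em + 2)]
      have h3 := mul_lt_mul_of_pos_left h2 (hU'pos s)
      calc δ * (U' s * (k * (1 + up - 2 * U s))) = U' s * (δ * (k * (1 + up - 2 * U s))) := by ring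
        _ < _ := h3
        _ = _ := by ring)
    (fun s => by
      refine mul_lt_mul_of_pos_left ?_ (hU'pos s)
      rw [hslope]
      have : 0 ≤ Γ * em := by positivity
      linarith [hU1 s])
  have hppos : ∀ s, 0 < p s := fun s => (mul_pos hδ0 (hhpos s)).trans_le (hp s).2.1
  have hpc : Continuous p := continuous_iff_continuousAt.2 fun s => (hp s).1.continuousAt
  set v : ℝ → ℝ := fun s => D * U s * U' s / (Γ * p s) with hv
  have hvc : Continuous v := ((continuous_const.mul hUc).mul hU'c).div
    (continuous_const.mul hpc) fun s => (mul_pos hΓ (hppos s)).ne'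
  have hΓk : 2 * (Γ * k) = Γ + 2 := by rw [hk]; field_simp
  obtain ⟨T, hTd, hTpos, hTneg⟩ := exists_hasDerivAt_inverse hvc
    (c := D * up / (Γ * (k * d))) (C := D / (d * δ)) (by positivity)
    (fun s => by
      rw [hv, div_le_div_iff₀ (by positivity) (mul_pos hΓ (hppos s))]
      have h1 : p s ≤ k * d * U' s := hhU' s ▸ (hp s).2.2
      calc D * up * (Γ * p s) ≤ D * U s * (Γ * (k * d * U' s)) := by
            have := (hU0 s).le
            have := (hppos s).le
            have := (hUpos s).le
            gcongr
        _ = _ := by ring)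
    (fun s => by
      rw [hv, div_le_div_iff₀ (mul_pos hΓ (hppos s)) (by positivity)]
      have h1 : δ * (k * d * U' s) ≤ p s := hhU' s ▸ (hp s).2.1
      have h2 : δ * d * U' s ≤ Γ * p s := by
        have h3 := mul_le_mul_of_nonneg_left h1 hΓ.le
        have h4 : 0 < δ * d * U' s := mul_pos (mul_pos hδ0 hd0) (hU'pos s)
        nlinarith
      calc D * U s * U' s * (d * δ) = D * (U s * (δ * d * U' s)) := by ring
        _ ≤ D * (1 * (Γ * p s)) := by
            have := (hU'pos s).le
            have := (hU1 s).le
            gcongr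
        _ = _ := by ring)
  have hTx : ∀ x, HasDerivAt (fun x => T (-x)) (-(v (T (-x)))⁻¹) x := fun x => by
    exact ((hTd (-x)).comp x (hasDerivAt_neg x)).congr_deriv (by ring)
  have hec : ∀ s, HasDerivAt (fun s => U s * (em + (1 - U s) / Γ) - p s)
      (-(U' s * (β * U s) * (h s / p s - 1))) s := fun s =>
    (((hUd s).mul ((((hUd s).const_sub 1).div_const Γ).const_add em)).sub (hp s).1).congr_deriv
      (by ring)
  refine ⟨fun x => U (T (-x)), fun x => U (T (-x)) * (em + (1 - U (T (-x))) / Γ) - p (T (-x)),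
    fun x => ?_, fun x => ?_, fun x => ⟨hU0 _, hU1 _⟩, fun x => ⟨?_, ?_⟩, fun x hx => ?_,
    fun x hx => ?_⟩
  · refine ((hUd _).comp x (hTx x)).congr_deriv ?_
    have h1 := (hUpos (T (-x))).ne'
    have h2 := (hU'pos (T (-x))).ne'
    have h3 := (hppos (T (-x))).ne'
    simp only [hv]
    field_simp
    ring
  · refine ((hec _).comp x (hTx x)).congr_deriv ?_
    have h1 := (hUpos (T (-x))).ne'
    have h2 := (hU'pos (T (-x))).ne'
    have h3 := (hppos (T (-x))).ne'
    have hgap : U (T (-x)) * (em + (1 - U (T (-x))) / Γ) - em - (U (T (-x)) - 1) ^ 2 / 2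
        + (U (T (-x)) - 1) * Γ * em = h (T (-x)) := by
      simp only [hh, hk]; field_simp; linear_combination (U (T (-x)) - 1) * hem
    trans ν⁻¹ * (h (T (-x)) - p (T (-x)))
    · simp only [hv, hβ]
      field_simp
    · rw [← hgap]; ring
  · have hgap : U (T (-x)) * (em + (1 - U (T (-x))) / Γ) - em - (U (T (-x)) - 1) ^ 2 / 2
        + (U (T (-x)) - 1) * Γ * em = h (T (-x)) := by
      simp only [hh, hk]; field_simp; linear_combination (U (T (-x)) - 1) * hem
    linarith [(hp (T (-x))).2.2]
  · linarith [hppos (T (-x))]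
  · have h1 := hTpos (-x) (by linarith)
    have h2 : 1 - U (T (-x)) = d * Real.sigmoid (-T (-x)) := by
      rw [Real.sigmoid_neg]; simp only [hU, hd]; ring
    calc 1 - U (T (-x)) ≤ Real.sigmoid (-T (-x)) :=
          h2 ▸ mul_le_of_le_one_left (hσ0 _).le hd1
      _ ≤ Real.exp (-T (-x)) := Real.sigmoid_le_exp _
      _ ≤ _ := Real.exp_le_exp.2 (by rw [neg_div] at h1; linarith)
  · have h1 := hTneg (-x) (by linarith)
    calc U (T (-x)) - up = d * Real.sigmoid (T (-x)) := by simp only [hU]; ring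
      _ ≤ Real.sigmoid (T (-x)) := mul_le_of_le_one_left (hσ0 _).le hd1
      _ ≤ Real.exp (T (-x)) := Real.sigmoid_le_exp _
      _ ≤ _ := Real.exp_le_exp.2 (by rw [neg_div] at h1; linarith)

/-- Closeness of the internal energy to its endstates, between the nullclines. -/
theorem abs_energy_sub_le {Γ Γ₀ up em ep u e : ℝ} (hΓ₀ : 0 < Γ₀) (hΓ : Γ₀ ≤ Γ) (hup : 0 < up)
    (hem : 2 * Γ * (Γ + 1) * em = (Γ + 2) * up - Γ) (hem0 : 0 ≤ em) (hem1 : Γ * em ≤ 1)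
    (hep : ep = up * (em + (1 - up) / Γ)) (hu0 : up < u) (hu1 : u < 1)
    (hlo : em + (u - 1) ^ 2 / 2 - (u - 1) * Γ * em ≤ e) (hhi : e ≤ u * (em + (1 - u) / Γ)) :
    |e - em| ≤ (3 + 1 / Γ₀) * (1 - u) ∧ |e - ep| ≤ (3 + 1 / Γ₀) * (u - up) := by
  have hΓ0 : 0 < Γ := hΓ₀.trans_le hΓ
  have hinv : 1 / Γ ≤ 1 / Γ₀ := one_div_le_one_div_of_le hΓ₀ hΓ
  have hinv0 : 0 < 1 / Γ := by positivity
  have hgap : u * (em + (1 - u) / Γ) = em + (u - 1) ^ 2 / 2 - (u - 1) * Γ * em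
      + (1 / 2 + 1 / Γ) * ((1 - u) * (u - up)) := by
    field_simp; linear_combination (u - 1) * hem
  have hend : ep = em + (up - 1) ^ 2 / 2 - (up - 1) * Γ * em := by
    rw [hep]; field_simp; linear_combination (up - 1) * hem
  have hx : 0 < 1 - u := by linarith
  have hy : 0 < u - up := by linarith
  have hz : 0 ≤ Γ * em := by positivity
  have hxy : 0 ≤ (1 - u) * (u - up) := by positivity
  have hK : (1 / 2 + 1 / Γ) * ((1 - u) * (u - up)) ≤ (1 / 2 + 1 / Γ₀) * ((1 - u) * (u - up)) :=
    mul_le_mul_of_nonneg_right (by linarith) hxy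
  have hK0 : 0 < 1 / 2 + 1 / Γ₀ := by linarith
  have hKx : (1 / 2 + 1 / Γ₀) * ((1 - u) * (u - up)) ≤ (1 / 2 + 1 / Γ₀) * (1 - u) :=
    mul_le_mul_of_nonneg_left (mul_le_of_le_one_right hx.le (by linarith)) hK0.le
  have hKy : (1 / 2 + 1 / Γ₀) * ((1 - u) * (u - up)) ≤ (1 / 2 + 1 / Γ₀) * (u - up) :=
    mul_le_mul_of_nonneg_left (mul_le_of_le_one_left hy.le (by linarith)) hK0.le
  have hxz : (1 - u) * (Γ * em) ≤ 1 - u := mul_le_of_le_one_right hx.le hem1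
  have hyz : (u - up) * (Γ * em) ≤ u - up := mul_le_of_le_one_right hy.le hem1
  have hxz0 : 0 ≤ (1 - u) * (Γ * em) := by positivity
  have hyz0 : 0 ≤ (u - up) * (Γ * em) := by positivity
  have hKx0 : 0 ≤ (1 / 2 + 1 / Γ₀) * (1 - u) := by positivity
  have hKy0 : 0 ≤ (1 / 2 + 1 / Γ₀) * (u - up) := by positivity
  have hxx : (1 - u) * (1 - u) ≤ 1 - u := mul_le_of_le_one_right hx.le (by linarith)
  have hyy : (u - up) * (2 - u - up) ≤ (u - up) * 2 :=
    mul_le_mul_of_nonneg_left (by linarith) hy.le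
  have hyy0 : 0 ≤ (u - up) * (2 - u - up) := mul_nonneg hy.le (by linarith)
  constructor
  · rw [abs_le]
    constructor <;> nlinarith
  · rw [hend, abs_le]
    constructor <;> nlinarith

/-- **Uniform existence and exponential decay of viscous shock profiles**
(Humpherys–Lyng–Zumbrun). For parameters `Γ ∈ [Γ₀,Γ₁]`, `μ, μ+η, ν ∈ [m₀,m₁]`, and
`u₊ ∈ [u*, u₁]` with `u* = Γ/(Γ+2)`, there exists a solution `(û, ê)` of the rescaled
profile ODE connecting `(1, e₋)` at `−∞` to `(u₊, e₊)` at `+∞`, with exponential decay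
rates uniform in all parameters. -/
theorem profile_existence_uniform_decay
    (Γ₀ Γ₁ m₀ m₁ u₁ : ℝ) (hΓ₀ : 0 < Γ₀) (hΓ : Γ₀ ≤ Γ₁)
    (hm₀ : 0 < m₀) (hm : m₀ ≤ m₁) (hu₁ : u₁ < 1) :
    ∃ C α : ℝ, 0 < C ∧ 0 < α ∧
      ∀ Γ μ η ν up : ℝ,
        Γ ∈ Set.Icc Γ₀ Γ₁ →
        μ ∈ Set.Icc m₀ m₁ → μ + η ∈ Set.Icc m₀ m₁ → ν ∈ Set.Icc m₀ m₁ →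
        up ∈ Set.Icc (Γ / (Γ + 2)) u₁ →
        ∃ u e : ℝ → ℝ,
          (∀ x : ℝ, HasDerivAt u
            ((2 * μ + η)⁻¹ * ((u x - 1) +
              Γ * (e x / u x - ((Γ + 2) * up - Γ) / (2 * Γ * (Γ + 1))))) x) ∧
          (∀ x : ℝ, HasDerivAt e
            (ν⁻¹ * ((e x - ((Γ + 2) * up - Γ) / (2 * Γ * (Γ + 1)))
              - (u x - 1) ^ 2 / 2 +
              (u x - 1) * Γ * (((Γ + 2) * up - Γ) / (2 * Γ * (Γ + 1))))) x) ∧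
          (∀ x : ℝ, x ≤ 0 →
            |u x - 1| + |e x - ((Γ + 2) * up - Γ) / (2 * Γ * (Γ + 1))|
              ≤ C * Real.exp (α * x)) ∧
          (∀ x : ℝ, 0 ≤ x →
            |u x - up| + |e x - up * (Γ + 2 - Γ * up) / (2 * Γ * (Γ + 1))|
              ≤ C * Real.exp (-α * x)) := by
  have hm₁ : 0 < m₁ := hm₀.trans_le hm
  have hΓ₁ : 0 < Γ₁ := hΓ₀.trans_le hΓ
  have hd₁ : 0 < 1 - u₁ := sub_pos.2 hu₁
  set b := 2 * m₀ / (m₁ * (Γ₁ + 2)) with hb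
  have hb0 : 0 < b := by positivity
  set δ := min (1 / 2) (b / (1 / Γ₀ + 3)) with hδ
  have hδ0 : 0 < δ := lt_min (by norm_num) (by positivity)
  set α := (1 - u₁) * δ / (2 * m₁) with hα
  refine ⟨4 + 1 / Γ₀, α, by positivity, by positivity, ?_⟩
  intro Γ μ η ν up hΓm hμ hμη hν hupm
  have hΓp : 0 < Γ := hΓ₀.trans_le hΓm.1
  have hνp : 0 < ν := hm₀.trans_le hν.1
  have hD0 : 2 * m₀ ≤ 2 * μ + η := by linarith [hμ.1, hμη.1]
  have hD1 : 2 * μ + η ≤ 2 * m₁ := by linarith [hμ.2, hμη.2]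
  have hDp : 0 < 2 * μ + η := by linarith
  have hup0 : 0 < up := lt_of_lt_of_le (by positivity) hupm.1
  have hup1 : up < 1 := hupm.2.trans_lt hu₁
  have hupΓ : Γ ≤ up * (Γ + 2) := (div_le_iff₀ (by positivity)).1 hupm.1
  have hep : up * (Γ + 2 - Γ * up) / (2 * Γ * (Γ + 1)) =
      up * (((Γ + 2) * up - Γ) / (2 * Γ * (Γ + 1)) + (1 - up) / Γ) := by
    field_simp; ring
  set em := ((Γ + 2) * up - Γ) / (2 * Γ * (Γ + 1)) with hemdef
  set ep := up * (Γ + 2 - Γ * up) / (2 * Γ * (Γ + 1))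
  have hem : 2 * Γ * (Γ + 1) * em = (Γ + 2) * up - Γ := by rw [hemdef]; field_simp
  have hem0 : 0 ≤ em := div_nonneg (by linarith) (by positivity)
  have hem1 : Γ * em ≤ 1 := by nlinarith [mul_nonneg hΓp.le hem0]
  have hδβ : δ * (1 / Γ + 3) ≤ (2 * μ + η) * up / (ν * Γ) := by
    have hinv : 1 / Γ ≤ 1 / Γ₀ := one_div_le_one_div_of_le hΓ₀ hΓm.1
    have hinv0 : 0 < 1 / Γ := by positivity
    calc δ * (1 / Γ + 3) ≤ b / (1 / Γ₀ + 3) * (1 / Γ₀ + 3) :=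
          mul_le_mul (min_le_right _ _) (by linarith) (by linarith) (by positivity)
      _ = b := div_mul_cancel₀ _ (by positivity)
      _ ≤ (2 * μ + η) / (ν * (Γ + 2)) :=
          div_le_div₀ hDp.le hD0 (by positivity)
            (mul_le_mul hν.2 (by linarith [hΓm.2]) (by linarith) hm₁.le)
      _ ≤ (2 * μ + η) * up / (ν * Γ) := by
          rw [div_le_div_iff₀ (by positivity) (by positivity)]
          have := mul_le_mul_of_nonneg_left hupΓ (mul_pos hDp hνp).le
          linarith
  obtain ⟨u, e, hu, he, hub, heb, hneg, hpos⟩ := exists_profile_between_nullclines hΓp hDp hνp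
    hup0 hup1 hem hem0 hem1 hδ0 (min_le_left _ _) hδβ
  have hrate : α ≤ 1 / ((2 * μ + η) / ((1 - up) * δ)) := by
    rw [one_div_div]
    exact div_le_div₀ (mul_pos (by linarith) hδ0).le
      (mul_le_mul_of_nonneg_right (by linarith [hupm.2]) hδ0.le) hDp hD1
  have hC : 0 ≤ 4 + 1 / Γ₀ := by positivity
  refine ⟨u, e, hu, he, fun x hx => ?_, fun x hx => ?_⟩
  · have h1 := (abs_energy_sub_le hΓ₀ hΓm.1 hup0 hem hem0 hem1 hep (hub x).1 (hub x).2
      (heb x).1 (heb x).2).1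
    have h2 : 1 - u x ≤ Real.exp (α * x) := (hneg x hx).trans <| Real.exp_le_exp.2 <| by
      have := mul_le_mul_of_nonpos_right hrate hx
      rwa [one_div_mul_eq_div] at this
    have h3 := mul_le_mul_of_nonneg_left h2 hC
    rw [abs_of_neg (by linarith [(hub x).2] : u x - 1 < 0)]
    linarith
  · have h1 := (abs_energy_sub_le hΓ₀ hΓm.1 hup0 hem hem0 hem1 hep (hub x).1 (hub x).2
      (heb x).1 (heb x).2).2
    have h2 : u x - up ≤ Real.exp (-α * x) := (hpos x hx).trans <| Real.exp_le_exp.2 <| by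
      have := mul_le_mul_of_nonneg_right hrate hx
      rw [one_div_mul_eq_div] at this
      linarith
    have h3 := mul_le_mul_of_nonneg_left h2 hC
    rw [abs_of_pos (by linarith [(hub x).1] : 0 < u x - up)]
    linarith
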